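/- arXiv:2409.06063 — 2 statements merged into one kernel-verified Lean document; each statement's English description precedes it below -/
import Mathlib

section
/- Let G be a connected, point-determining finite simple graph. Then there exists N ∈ ℕ such that for every k ≥ N, the minimum of u_ℓ(G,L) over all k-assignments L for G equals the number of orbits of the action of Aut(G) on proper colorings f : V(G) → {1,…,k} (where π sends f to f∘π⁻¹). -/
/-!
Write `K` for the constant `k`-assignment `v ↦ {0, …, k - 1}`, so that `unlabeledP G k = uell G K`
(`unlabeledP_eq`). It has to be shown that for large `k` no `k`-assignment `L` has fewer classes
than `K` (`uell_const_le`).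

* Ordinary colorings (`listP_const_le`). By inclusion–exclusion over the edges (`incl_excl`), the
  difference `listP G L - listP G K` is an alternating sum over edge sets `A` of differences of the
  numbers of list functions that are constant along `A`. Measure the failure of `L` to be constant
  by `D = ∑ |L u ∆ L v|` over the edges `uv`. The single edges contribute
  `(D / 2) * k ^ (n - 2)` exactly (`card_single`), and an edge set with at least two edges
  contributes at most `n * D * k ^ (n - 3)` in absolute value (`diff_bound`, `two_le_nonrep`). Hence
  the difference is nonnegative for large `k`.

* If `L` is constant on the orbits of `Aut G`, then `Aut G` acts on the `L`-colorings, and by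
  Burnside's lemma it is enough to compare the numbers of colorings fixed by each automorphism `π`.
  These are the proper list colorings of the quotient graph of `G` by `π`, to which the first point
  applies (`fixP_const_le`).

* Otherwise some color `c` lies in `L (π v)` but not in `L v`. The class of an `L`-coloring `f` with
  `f (π v) = c` omits `f ∘ π`, so it has fewer than `|Aut G|` elements. There are about `k ^ (n - 1)`
  such colorings (`special_lower`), which raises the number of classes above
  `listP G L / |Aut G|` by an amount of order `k ^ (n - 1)` (`class_bound`). On the other hand, a
  nontrivial automorphism of a point-determining graph fixes at most `k ^ (n - 2)` of the
  `K`-colorings, because it is not the transposition of two nonadjacent vertices (`fixP_mul_le`); so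
  `uell G K` exceeds `listP G K / |Aut G|` by only `O(k ^ (n - 2))`.

To avoid truncated subtraction in exponents, the estimates are multiplied through by powers of `k`.
-/

/-- `f` is a proper coloring of `G`: adjacent vertices get different colors. -/
def IsProper {V α : Type*} (G : SimpleGraph V) (f : V → α) : Prop :=
  ∀ ⦃u v : V⦄, G.Adj u v → f u ≠ f v

/-- `P(G,k)`: the number of proper colorings of `G` with colors in `Fin k`. -/
noncomputable def chromP {V : Type*} (G : SimpleGraph V) (k : ℕ) : ℕ :=
  Nat.card {f : V → Fin k // IsProper G f}

/-- `P(G,L)`: the number of proper `L`-colorings of `G`. -/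
noncomputable def listP {V : Type*} (G : SimpleGraph V) (L : V → Finset ℕ) : ℕ :=
  Nat.card {f : V → ℕ // IsProper G f ∧ ∀ v, f v ∈ L v}

/-- `u_ℓ(G,L)`: the number of equivalence classes of proper `L`-colorings of `G`,
where `f ~ g` iff `f ∘ π = g` for some automorphism `π` of `G`. -/
noncomputable def uell {V : Type*} (G : SimpleGraph V) (L : V → Finset ℕ) : ℕ :=
  Nat.card (Quot (fun f g : {f : V → ℕ // IsProper G f ∧ ∀ v, f v ∈ L v} =>
    ∃ π : G ≃g G, ∀ v, f.1 (π v) = g.1 v))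

/-- `P(𝒢,k)`: the number of orbits of the action of `Aut(G)` on proper colorings
`V → Fin k` (where `π` sends `f` to `f ∘ π⁻¹`); two colorings are in the same orbit
iff `f ∘ π = g` for some automorphism `π`. -/
noncomputable def unlabeledP {V : Type*} (G : SimpleGraph V) (k : ℕ) : ℕ :=
  Nat.card (Quot (fun f g : {f : V → Fin k // IsProper G f} =>
    ∃ π : G ≃g G, ∀ v, f.1 (π v) = g.1 v))

/-- `P_ℓ(𝒢,k)`: the minimum of `u_ℓ(G,L)` over all `k`-assignments `L` for `G`. -/
noncomputable def Pell {V : Type*} (G : SimpleGraph V) (k : ℕ) : ℕ :=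
  sInf {n | ∃ L : V → Finset ℕ, (∀ v, (L v).card = k) ∧ n = uell G L}

/-! ### Functions constant along a set of pairs -/

open Finset in
/-- List functions that factor through an idempotent map `r` are determined by their values on the
fixed points of `r`. -/
theorem card_factor {W : Type*} [Fintype W] [DecidableEq W] (r : W → W)
    (hr : ∀ v, r (r v) = r v) (L : W → Finset ℕ) :
    #{f ∈ Fintype.piFinset (fun v => L (r v)) | ∀ v, f v = f (r v)} =
      ∏ c with r c = c, #(L c) := by
  rw [← Finset.card_pi]
  refine Finset.card_nbij' (fun f c _ => f c)
    (fun g v => g (r v) (by simp [hr])) ?_ ?_ ?_ ?_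
  · intro f hf
    simp only [Fintype.mem_piFinset,
      Finset.mem_coe, Finset.mem_pi, Finset.mem_filter, Finset.mem_univ, true_and] at hf ⊢
    intro c hc
    have := hf.1 c
    rwa [hc] at this
  · intro g hg
    simp only [Finset.mem_coe, Finset.mem_pi, Finset.mem_filter, Finset.mem_univ, true_and,
      Fintype.mem_piFinset] at hg ⊢
    refine ⟨fun v => hg _ (hr v), fun v => ?_⟩
    congr 1
    exact (hr v).symm
  · intro f hf
    simp only [Finset.mem_coe, Finset.mem_filter] at hf
    funext v
    exact (hf.2 v).symm
  · intro g hg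
    funext c hc
    have : r c = c := by simpa using hc
    dsimp only
    congr 1

open Finset in
/-- Inclusion–exclusion for the functions that are nonconstant on every pair in `E`. -/
theorem incl_excl {W : Type*} [Fintype W] [DecidableEq W] (E : Finset (W × W))
    (L : W → Finset ℕ) :
    (#{f ∈ Fintype.piFinset L | ∀ p ∈ E, f p.1 ≠ f p.2} : ℤ) =
      ∑ A ∈ E.powerset, (-1) ^ #A * (#{f ∈ Fintype.piFinset L | ∀ p ∈ A, f p.1 = f p.2} : ℤ) := by
  simp_rw [Finset.card_filter, Nat.cast_sum, Finset.mul_sum]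
  rw [Finset.sum_comm]
  refine Finset.sum_congr rfl fun f _ => ?_
  have h1 : ((if ∀ p ∈ E, f p.1 ≠ f p.2 then 1 else 0 : ℕ) : ℤ) =
      ∏ p ∈ E, (1 + -(if f p.1 = f p.2 then 1 else 0 : ℤ)) := by
    split_ifs with h
    · rw [Finset.prod_eq_one]
      · simp
      · intro p hp
        simp [h p hp]
    · push Not at h
      obtain ⟨p, hp, hpe⟩ := h
      rw [Finset.prod_eq_zero hp]
      · simp
      · simp [hpe]
  rw [h1, Finset.prod_one_add]
  refine Finset.sum_congr rfl fun A _ => ?_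
  rw [Finset.prod_neg, Finset.prod_ite_zero]
  simp

/-- A choice of representatives for the equivalence relation generated by `A`. -/
theorem exists_rep {W : Type*} (A : Finset (W × W)) :
    ∃ r : W → W, (∀ v, r (r v) = r v) ∧ (∀ p ∈ A, r p.1 = r p.2) ∧
      ∀ v, Relation.EqvGen (fun a b => (a, b) ∈ A) (r v) v := by
  refine ⟨fun v => (Quot.mk (fun a b => (a, b) ∈ A) v).out, fun v => ?_, fun p hp => ?_, fun v => ?_⟩
  · simp only [Quot.out_eq]
  · dsimp only
    rw [Quot.sound (r := fun a b => (a, b) ∈ A) (a := p.1) (b := p.2) hp]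
  · exact Quot.eqvGen_exact (Quot.out_eq _)

theorem eqvGen_const {W α : Type*} {A : Finset (W × W)} (φ : W → α)
    (h : ∀ p ∈ A, φ p.1 = φ p.2) {a b : W} (hab : Relation.EqvGen (fun a b => (a, b) ∈ A) a b) :
    φ a = φ b := by
  induction hab with
  | rel a b hp => exact h _ hp
  | refl => rfl
  | symm a b _ ih => exact ih.symm
  | trans a b c _ _ ih1 ih2 => exact ih1.trans ih2

open Finset in
/-- If `A` has at least two edges, each listed in one orientation only, then the graph with edge set
`A` has at most `n - 2` components. -/
theorem two_le_nonrep {W : Type*} [Fintype W] [DecidableEq W] {A : Finset (W × W)}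
    (hA1 : ∀ p ∈ A, p.1 ≠ p.2) (hA2 : ∀ p ∈ A, p.swap ∉ A) (h2 : 2 ≤ #A)
    {r : W → W} (hr : ∀ p ∈ A, r p.1 = r p.2) :
    #{c | r c = c} + 2 ≤ Fintype.card W := by
  by_contra! hlt
  have hsum := Finset.card_filter_add_card_filter_not (s := (univ : Finset W)) (fun c => r c = c)
  rw [Finset.card_univ] at hsum
  have h1 : #{c | ¬ r c = c} ≤ 1 := by omega
  rw [Finset.card_le_one] at h1
  simp only [Finset.mem_filter, Finset.mem_univ, true_and] at h1
  obtain ⟨p, hp, q, hq, hpq⟩ := Finset.one_lt_card.1 h2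
  have := hA1 p hp
  have := hA1 q hq
  have := hr p hp
  have := hr q hq
  have := hA2 p hp
  obtain ⟨a, b⟩ := p
  obtain ⟨c, d⟩ := q
  simp only [Prod.swap, ne_eq, Prod.mk.injEq] at *
  -- There is at most one vertex outside the representatives; every pair in `A` then contains it,
  -- and two different pairs give two representatives of one class.
  have h1' : ∀ x y, x ≠ y → r x = x ∨ r y = y := fun x y hxy => by
    by_contra! h; exact hxy (h1 x h.1 y h.2)
  clear h1
  grind

open Finset in
/-- The number of list functions constant along `A` is at most `k ^ c`, where `c` is the number of
classes of the relation generated by `A`, and the defect is controlled by the symmetric differences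
of the lists along `A`. -/
theorem diff_bound {W : Type*} [Fintype W] [DecidableEq W] (A : Finset (W × W)) {k : ℕ}
    {r : W → W} (hr : ∀ v, r (r v) = r v) (hrA : ∀ p ∈ A, r p.1 = r p.2)
    (hrE : ∀ v, Relation.EqvGen (fun a b => (a, b) ∈ A) (r v) v)
    (L : W → Finset ℕ) (hL : ∀ v, #(L v) = k) :
    #{f ∈ Fintype.piFinset L | ∀ p ∈ A, f p.1 = f p.2} ≤ k ^ #{c | r c = c} ∧
    k * k ^ #{c | r c = c} ≤ k * #{f ∈ Fintype.piFinset L | ∀ p ∈ A, f p.1 = f p.2} +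
      Fintype.card W * (∑ p ∈ A, #(symmDiff (L p.1) (L p.2))) * k ^ #{c | r c = c} := by
  have hY := card_factor r hr L
  rw [Finset.prod_congr rfl (fun c _ => hL c), Finset.prod_const] at hY
  rw [← hY]
  -- The functions constant along `A` are those that factor through `r`.
  have hfr : ∀ f : W → ℕ, (∀ p ∈ A, f p.1 = f p.2) → ∀ v, f v = f (r v) := by
    intro f hf v
    exact (eqvGen_const f hf (hrE v)).symm
  have hsub : ∀ v, #(L (r v) \ L v) ≤ ∑ p ∈ A, #(symmDiff (L p.1) (L p.2)) := by
    intro v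
    refine le_trans (Finset.card_le_card ?_) Finset.card_biUnion_le
    intro x hx
    by_contra hcon
    simp only [Finset.mem_biUnion, not_exists, not_and, Finset.mem_symmDiff] at hcon
    have key : (x ∈ L (r v)) = (x ∈ L v) :=
      eqvGen_const (fun v => x ∈ L v) (fun p hp => by have := hcon p hp; grind) (hrE v)
    rw [Finset.mem_sdiff, key] at hx
    exact hx.2 hx.1
  constructor
  · refine Finset.card_le_card ?_
    intro f hf
    simp only [Finset.mem_filter, Fintype.mem_piFinset] at hf ⊢
    have := hfr f hf.2
    exact ⟨fun v => by rw [this v]; exact hf.1 _, this⟩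
  · set Y := ({f ∈ Fintype.piFinset (fun v => L (r v)) | ∀ v, f v = f (r v)} : Finset (W → ℕ))
      with hYdef
    -- `Y` consists of the functions factoring through `r` that respect the lists at the
    -- representatives, and `B v` of those among them that violate the list at `v`.
    set B : W → Finset (W → ℕ) := fun v =>
      {f ∈ Fintype.piFinset (fun w => Function.update L (r v) (L (r v) \ L v) (r w)) |
        ∀ w, f w = f (r w)} with hB
    have hcover : Y ⊆ ({f ∈ Fintype.piFinset L | ∀ p ∈ A, f p.1 = f p.2} : Finset (W → ℕ)) ∪
        univ.biUnion B := by
      intro f hf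
      simp only [hYdef, Finset.mem_filter, Fintype.mem_piFinset] at hf
      simp only [Finset.mem_union, Finset.mem_biUnion, Finset.mem_univ, true_and, hB,
        Finset.mem_filter, Fintype.mem_piFinset]
      by_cases h : ∀ v, f v ∈ L v
      · left
        refine ⟨h, fun p hp => ?_⟩
        rw [hf.2, hrA p hp, ← hf.2]
      · right
        push Not at h
        obtain ⟨v, hv⟩ := h
        refine ⟨v, fun w => ?_, hf.2⟩
        by_cases hw : r w = r v
        · rw [hw, Function.update_self, Finset.mem_sdiff]
          have e : f w = f v := by rw [hf.2, hw, ← hf.2]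
          rw [e]
          exact ⟨hf.1 v, hv⟩
        · rw [Function.update_of_ne hw]
          exact hf.1 w
    have hBc : ∀ v, k * #(B v) = #(L (r v) \ L v) * #Y := by
      intro v
      have hm : r v ∈ ({c | r c = c} : Finset W) := by simp [hr]
      rw [hY, ← Finset.prod_const, ← Finset.mul_prod_erase _ (fun _ => k) hm, hB]
      simp only
      rw [card_factor r hr, ← Finset.mul_prod_erase _ _ hm, Function.update_self,
        Finset.prod_congr (s₂ := ({c | r c = c} : Finset W).erase (r v)) rfl (g := fun _ => k)]
      · ring
      · intro c hc
        rw [Function.update_of_ne (Finset.ne_of_mem_erase hc), hL]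
    have h1 : #Y ≤ _ := (Finset.card_le_card hcover).trans (Finset.card_union_le _ _)
    have h2 : #(univ.biUnion B) ≤ ∑ v, #(B v) := Finset.card_biUnion_le
    have h3 : k * ∑ v, #(B v) ≤ Fintype.card W * (∑ p ∈ A, #(symmDiff (L p.1) (L p.2))) * #Y := by
      rw [Finset.mul_sum, mul_assoc]
      refine (Finset.sum_le_card_nsmul univ _ ((∑ p ∈ A, #(symmDiff (L p.1) (L p.2))) * #Y)
        fun v _ => ?_).trans (by rw [Finset.card_univ, smul_eq_mul])
      rw [hBc]
      exact Nat.mul_le_mul_right _ (hsub v)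
    calc k * #Y ≤ k * (_ + ∑ v, #(B v)) := Nat.mul_le_mul_left _ (h1.trans (Nat.add_le_add_left h2 _))
      _ ≤ _ := by rw [mul_add]; exact Nat.add_le_add_left h3 _

open Finset in
/-- There are exactly `|L a ∩ L b| * k ^ (n - 2)` list functions `f` with `f a = f b`. -/
theorem card_single {W : Type*} [Fintype W] [DecidableEq W] {a b : W} (hab : a ≠ b) {k : ℕ}
    (L : W → Finset ℕ) (hL : ∀ v, #(L v) = k) :
    #{f ∈ Fintype.piFinset L | ∀ p ∈ ({(a, b)} : Finset (W × W)), f p.1 = f p.2} * k ^ 2 =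
      #(L a ∩ L b) * k ^ Fintype.card W := by
  have hr : ∀ v, Function.update id a b (Function.update id a b v) = Function.update id a b v := by
    intro v
    by_cases h : v = a
    · subst h; simp [Function.update_of_ne hab.symm]
    · simp [Function.update_of_ne h]
  -- Replace `a` by `b`, and the list of `b` by `L a ∩ L b`.
  have hset : ({f ∈ Fintype.piFinset L | ∀ p ∈ ({(a, b)} : Finset (W × W)), f p.1 = f p.2}
      : Finset (W → ℕ)) =
      {f ∈ Fintype.piFinset (fun v => Function.update L b (L a ∩ L b) (Function.update id a b v)) |
        ∀ v, f v = f (Function.update id a b v)} := by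
    ext f
    simp only [Finset.mem_filter, Fintype.mem_piFinset, Finset.mem_singleton, forall_eq]
    constructor
    · rintro ⟨h1, h2⟩
      refine ⟨fun v => ?_, fun v => ?_⟩
      · by_cases h : v = a
        · subst h; simp [h1 v]; rw [h2]; exact h1 b
        · by_cases h' : v = b
          · subst h'; simp [h, h1 v]; rw [← h2]; exact h1 a
          · simp [Function.update_of_ne h, Function.update_of_ne h', h1 v]
      · by_cases h : v = a
        · subst h; simpa using h2
        · simp [Function.update_of_ne h]
    · rintro ⟨h1, h2⟩
      refine ⟨fun v => ?_, by simpa using h2 a⟩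
      have := h1 v
      by_cases h : v = a
      · subst h; simp at this; exact this.1
      · by_cases h' : v = b
        · subst h'; simp [h] at this; exact this.2
        · simpa [Function.update_of_ne h, Function.update_of_ne h'] using this
  have hR : ({c | Function.update id a b c = c} : Finset W) = univ.erase a := by
    ext c
    by_cases h : c = a
    · subst h; simp [hab.symm]
    · simp [h]
  have hb : b ∈ (univ.erase a : Finset W) := by simp [hab.symm]
  rw [hset, card_factor _ hr, hR, ← Finset.mul_prod_erase _ _ hb, Function.update_self,
    Finset.prod_congr rfl (g := fun _ => k), Finset.prod_const, mul_assoc, ← pow_add]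
  · have h1 := Finset.card_erase_add_one hb
    have h2 := Finset.card_erase_add_one (Finset.mem_univ a)
    rw [Finset.card_univ] at h2
    congr 2
    omega
  · intro c hc
    rw [Function.update_of_ne (Finset.ne_of_mem_erase hc), hL]

/-! ### Constant lists minimize the number of list colorings -/

open Finset in
/-- Lower bound, scaled by `2 * k ^ 3`, for the inclusion–exclusion term of `A` in
`listP G L - listP G K`: one formula covers the main terms `A = {p}`, the vanishing term `A = ∅`,
and the error terms with `|A| ≥ 2`. -/
theorem term_bound {W : Type*} [Fintype W] [DecidableEq W] {E A : Finset (W × W)}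
    (hE1 : ∀ p ∈ E, p.1 ≠ p.2) (hE2 : ∀ p ∈ E, p.swap ∉ E) (hA : A ⊆ E) (k : ℕ)
    (L : W → Finset ℕ) (hL : ∀ v, #(L v) = k) :
    (∑ p ∈ E, if A = {p} then (#(symmDiff (L p.1) (L p.2)) * k ^ (Fintype.card W + 1) : ℤ) else 0) -
        2 * Fintype.card W * (∑ p ∈ E, (#(symmDiff (L p.1) (L p.2)) : ℤ)) * k ^ Fintype.card W ≤
      2 * k ^ 3 * ((-1) ^ #A * ((#{f ∈ Fintype.piFinset L | ∀ p ∈ A, f p.1 = f p.2} : ℤ) -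
        #{f ∈ Fintype.piFinset (fun _ : W => range k) | ∀ p ∈ A, f p.1 = f p.2})) := by
  have hB : 0 ≤ 2 * Fintype.card W * (∑ p ∈ E, (#(symmDiff (L p.1) (L p.2)) : ℤ)) *
    k ^ Fintype.card W := by positivity
  have hcase : A = ∅ ∨ (∃ p, A = {p}) ∨ 2 ≤ #A := by
    rcases Nat.lt_or_ge #A 2 with h | h
    · have : #A = 0 ∨ #A = 1 := by omega
      rcases this with h | h
      · exact Or.inl (Finset.card_eq_zero.1 h)
      · exact Or.inr (Or.inl (Finset.card_eq_one.1 h))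
    · exact Or.inr (Or.inr h)
  rcases hcase with rfl | ⟨p, rfl⟩ | h2
  · have h0 : ∀ p : W × W, (∅ : Finset (W × W)) ≠ {p} := fun p => (Finset.singleton_ne_empty p).symm
    simp only [h0, if_false, Finset.sum_const_zero, Finset.notMem_empty, false_imp_iff,
      implies_true, Finset.filter_true, Fintype.card_piFinset, hL, Finset.card_range, sub_self,
      mul_zero]
    linarith
  · obtain ⟨a, b⟩ := p
    have hp : (a, b) ∈ E := hA (Finset.mem_singleton_self _)
    have hs : (∑ p ∈ E, if ({(a, b)} : Finset (W × W)) = {p} then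
        (#(symmDiff (L p.1) (L p.2)) * k ^ (Fintype.card W + 1) : ℤ) else 0) =
        #(symmDiff (L a) (L b)) * k ^ (Fintype.card W + 1) := by
      simp only [Finset.singleton_inj]
      rw [Finset.sum_ite_eq, if_pos hp]
    have e1 := card_single (hE1 _ hp) L hL
    have e2 := card_single (hE1 _ hp) (fun _ => range k) (fun _ => Finset.card_range k)
    rw [Finset.inter_self, Finset.card_range] at e2
    have e3 : #(symmDiff (L a) (L b)) + 2 * #(L a ∩ L b) = 2 * k := by
      rw [symmDiff_def, Finset.sup_eq_union, Finset.card_union_of_disjoint disjoint_sdiff_sdiff]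
      have h1 := Finset.card_sdiff_add_card_inter (L a) (L b)
      have h2 := Finset.card_sdiff_add_card_inter (L b) (L a)
      rw [Finset.inter_comm] at h2
      rw [hL] at h1 h2
      omega
    rw [hs]
    generalize #{f ∈ Fintype.piFinset L | ∀ p ∈ ({(a, b)} : Finset (W × W)), f p.1 = f p.2} = X
      at e1 ⊢
    generalize #{f ∈ Fintype.piFinset (fun _ : W => range k) |
      ∀ p ∈ ({(a, b)} : Finset (W × W)), f p.1 = f p.2} = Y at e2 ⊢
    zify at e1 e2 e3
    have e4 : 2 * (k : ℤ) ^ 3 * ((-1) ^ #{(a, b)} * ((X : ℤ) - Y)) =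
        #(symmDiff (L a) (L b)) * (k : ℤ) ^ (Fintype.card W + 1) := by
      rw [Finset.card_singleton, pow_succ]
      linear_combination (-2 * (k : ℤ)) * e1 + 2 * (k : ℤ) * e2 -
        (k : ℤ) ^ (Fintype.card W + 1) * e3
    linarith
  · have hA1 : ∀ p ∈ A, p.1 ≠ p.2 := fun p hp => hE1 p (hA hp)
    have hA2 : ∀ p ∈ A, p.swap ∉ A := fun p hp h => hE2 p (hA hp) (hA h)
    obtain ⟨r, hr, hrA, hrE⟩ := exists_rep A
    have hcard := two_le_nonrep hA1 hA2 h2 hrA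
    obtain ⟨u1, u2⟩ := diff_bound A hr hrA hrE L hL
    obtain ⟨v1, v2⟩ := diff_bound A hr hrA hrE (fun _ => range k) (fun _ => Finset.card_range k)
    have hs : (∑ p ∈ E, if A = {p} then
        (#(symmDiff (L p.1) (L p.2)) * k ^ (Fintype.card W + 1) : ℤ) else 0) = 0 := by
      refine Finset.sum_eq_zero fun p _ => if_neg ?_
      rintro rfl
      simp at h2
    rw [hs]
    have hD : ∑ p ∈ A, #(symmDiff (L p.1) (L p.2)) ≤ ∑ p ∈ E, #(symmDiff (L p.1) (L p.2)) :=
      Finset.sum_le_sum_of_subset hA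
    simp only [symmDiff_self, Finset.bot_eq_empty, Finset.card_empty, Finset.sum_const_zero,
      mul_zero, zero_mul, add_zero] at v2
    set M := #{c | r c = c}
    set D := ∑ p ∈ E, #(symmDiff (L p.1) (L p.2)) with hDdef
    set X := #{f ∈ Fintype.piFinset L | ∀ p ∈ A, f p.1 = f p.2}
    set Y := #{f ∈ Fintype.piFinset (fun _ : W => range k) | ∀ p ∈ A, f p.1 = f p.2}
    have hDz : (∑ p ∈ E, (#(symmDiff (L p.1) (L p.2)) : ℤ)) = (D : ℤ) := by
      rw [hDdef]; push_cast; rfl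
    rw [hDz]
    clear_value X Y D M
    have h3 : k * X ≤ k * Y := (Nat.mul_le_mul_left k u1).trans v2
    have h4 : k * Y ≤ k * X + Fintype.card W * D * k ^ M := by
      refine (Nat.mul_le_mul_left k v1).trans (u2.trans ?_)
      gcongr
    have h5 : k ^ 2 * k ^ M ≤ k ^ Fintype.card W := by
      rcases Nat.eq_zero_or_pos k with rfl | hk
      · simp
      · rw [← pow_add]
        exact Nat.pow_le_pow_right hk (by omega)
    have h6 : k ^ 3 * Y ≤ k ^ 3 * X + Fintype.card W * D * k ^ Fintype.card W := by
      calc k ^ 3 * Y = k ^ 2 * (k * Y) := by ring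
        _ ≤ k ^ 2 * (k * X + Fintype.card W * D * k ^ M) := by gcongr
        _ = k ^ 3 * X + Fintype.card W * D * (k ^ 2 * k ^ M) := by ring
        _ ≤ _ := by gcongr
    have h7 : k ^ 3 * X ≤ k ^ 3 * Y := by
      calc k ^ 3 * X = k ^ 2 * (k * X) := by ring
        _ ≤ k ^ 2 * (k * Y) := by gcongr
        _ = _ := by ring
    zify at h6 h7
    have h8 : (0 : ℤ) ≤ Fintype.card W * D * k ^ Fintype.card W := by positivity
    rcases neg_one_pow_eq_or ℤ #A with h | h <;> rw [h] <;> linarith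

/-- For all large `k`, constant lists minimize the number of proper list colorings. -/
theorem listP_const_le {W : Type*} [Finite W] (G : SimpleGraph W) :
    ∃ N : ℕ, ∀ k : ℕ, N ≤ k → ∀ L : W → Finset ℕ, (∀ v, (L v).card = k) →
      listP G (fun _ => Finset.range k) ≤ listP G L := by
  classical
  have := Fintype.ofFinite W
  -- An enumeration of the vertices orients every edge exactly once.
  let e := Fintype.equivFin W
  let E : Finset (W × W) := Finset.univ.filter fun p => G.Adj p.1 p.2 ∧ e p.1 < e p.2
  have hE1 : ∀ p ∈ E, p.1 ≠ p.2 := fun p hp => by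
    simp only [E, Finset.mem_filter] at hp
    exact hp.2.1.ne
  have hE2 : ∀ p ∈ E, p.swap ∉ E := fun p hp hp' => by
    simp only [E, Finset.mem_filter, Prod.fst_swap, Prod.snd_swap] at hp hp'
    exact lt_asymm hp.2.2 hp'.2.2
  have hcount : ∀ L : W → Finset ℕ, listP G L =
      (Finset.filter (fun f : W → ℕ => ∀ p ∈ E, f p.1 ≠ f p.2) (Fintype.piFinset L)).card := by
    intro L
    refine Nat.subtype_card _ fun f => ?_
    simp only [Finset.mem_filter, Fintype.mem_piFinset, E, Finset.mem_univ, true_and]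
    rw [and_comm]
    refine and_congr_left' ⟨fun h u v huv => ?_, fun h p hp => h hp.1⟩
    rcases lt_or_gt_of_ne (e.injective.ne huv.ne) with hlt | hlt
    · exact h (u, v) ⟨huv, hlt⟩
    · exact (h (v, u) ⟨huv.symm, hlt⟩).symm
  refine ⟨2 ^ E.card * (2 * Fintype.card W) + 1, fun k hk L hL => ?_⟩
  rw [hcount, hcount]
  have i1 := incl_excl E L
  have i2 := incl_excl E (fun _ => Finset.range k)
  have hsum := Finset.sum_le_sum fun A (hA : A ∈ E.powerset) =>
    term_bound hE1 hE2 (Finset.mem_powerset.1 hA) k L hL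
  simp only [← Finset.mul_sum, mul_sub ((-1 : ℤ) ^ _)] at hsum
  rw [Finset.sum_sub_distrib, Finset.sum_sub_distrib, ← i1, ← i2, Finset.sum_const,
    Finset.card_powerset, Finset.sum_comm] at hsum
  have hs : (∑ p ∈ E, ∑ A ∈ E.powerset, if A = {p} then
      (((symmDiff (L p.1) (L p.2)).card : ℤ) * k ^ (Fintype.card W + 1)) else 0) =
      (∑ p ∈ E, ((symmDiff (L p.1) (L p.2)).card : ℤ)) * k ^ (Fintype.card W + 1) := by
    rw [Finset.sum_mul]
    refine Finset.sum_congr rfl fun p hp => ?_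
    rw [Finset.sum_ite_eq', if_pos]
    simpa using hp
  rw [hs] at hsum
  set D := ∑ p ∈ E, ((symmDiff (L p.1) (L p.2)).card : ℤ)
  have hD : 0 ≤ D := Finset.sum_nonneg fun _ _ => Int.natCast_nonneg _
  clear_value D
  have hmain : (0 : ℤ) ≤ D * k ^ (Fintype.card W + 1) -
      2 ^ E.card • (2 * Fintype.card W * D * k ^ Fintype.card W) := by
    have hk' : (2 : ℤ) ^ E.card * (2 * Fintype.card W) ≤ k := by
      exact_mod_cast (Nat.le_succ _).trans hk
    have : D * k ^ (Fintype.card W + 1) -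
      2 ^ E.card • (2 * Fintype.card W * D * k ^ Fintype.card W) =
        (k - (2 : ℤ) ^ E.card * (2 * Fintype.card W)) * (D * k ^ Fintype.card W) := by
      rw [nsmul_eq_mul]; push_cast; ring
    rw [this]
    exact mul_nonneg (by linarith) (by positivity)
  have hkpos : (0 : ℤ) < 2 * k ^ 3 := by
    have : 0 < k := by omega
    positivity
  have := nonneg_of_mul_nonneg_right (hmain.trans hsum) hkpos
  exact Int.ofNat_le.1 (sub_nonneg.1 this)

/-! ### Orbits of colorings and fixed colorings -/

/-- The proper `L`-colorings of `G`. -/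
abbrev LCol {V : Type*} (G : SimpleGraph V) (L : V → Finset ℕ) : Type _ :=
  {f : V → ℕ // IsProper G f ∧ ∀ v, f v ∈ L v}

/-- The number of proper `L`-colorings of `G` that are fixed by the automorphism `π`. -/
noncomputable def fixP {V : Type*} (G : SimpleGraph V) (L : V → Finset ℕ) (π : G ≃g G) : ℕ :=
  Nat.card {f : LCol G L // ∀ v, f.1 (π v) = f.1 v}

theorem finite_lCol {V : Type*} [Finite V] (G : SimpleGraph V) (L : V → Finset ℕ) :
    Finite (LCol G L) :=
  Finite.of_injective (fun (f : LCol G L) (v : V) => (⟨f.1 v, f.2.2 v⟩ : {x // x ∈ L v}))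
    fun _ _ h => Subtype.ext (funext fun v => congrArg Subtype.val (congrFun h v))

theorem finite_aut {V : Type*} [Finite V] (G : SimpleGraph V) : Finite (G ≃g G) :=
  Finite.of_injective (fun (π : G ≃g G) => (π : V → V)) DFunLike.coe_injective

theorem unlabeledP_eq {V : Type*} (G : SimpleGraph V) (k : ℕ) :
    unlabeledP G k = uell G (fun _ => Finset.range k) := by
  let e : {f : V → Fin k // IsProper G f} ≃ LCol G (fun _ => Finset.range k) :=
    { toFun := fun f => ⟨fun v => (f.1 v : ℕ),
        fun u v huv h => f.2 huv (Fin.ext h), fun v => Finset.mem_range.2 (f.1 v).2⟩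
      invFun := fun f => ⟨fun v => ⟨f.1 v, Finset.mem_range.1 (f.2.2 v)⟩,
        fun u v huv h => f.2.1 huv (congrArg Fin.val h)⟩
      left_inv := fun f => rfl
      right_inv := fun f => rfl }
  refine Nat.card_congr (Quot.congr e fun _ _ => exists_congr fun π => forall_congr' fun v => ?_)
  exact Fin.ext_iff

/-- Burnside's lemma for lists that are constant on the orbits of `Aut G`. -/
theorem burnside {V : Type*} [Finite V] (G : SimpleGraph V) [Fintype (G ≃g G)] (L : V → Finset ℕ)
    (hL : ∀ (π : G ≃g G) v, L (π v) = L v) :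
    ∑ π : G ≃g G, fixP G L π = uell G L * Fintype.card (G ≃g G) := by
  classical
  have := finite_lCol G L
  let _ : MulAction (G ≃g G) (LCol G L) :=
    { smul := fun π f => ⟨fun v => f.1 (π.symm v),
        fun u v huv => f.2.1 (π.symm.map_rel_iff.2 huv), fun v => by
          have := f.2.2 (π.symm v)
          rwa [hL] at this⟩
      one_smul := fun f => rfl
      mul_smul := fun π σ f => rfl }
  have hsmul : ∀ (π : G ≃g G) (f : LCol G L) v, (π • f).1 v = f.1 (π.symm v) := fun _ _ _ => rfl
  have := Fintype.ofFinite (LCol G L)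
  let _ : Fintype (Quotient (MulAction.orbitRel (G ≃g G) (LCol G L))) := Fintype.ofFinite _
  have hb := MulAction.sum_card_fixedBy_eq_card_orbits_mul_card_group (G ≃g G) (LCol G L)
  have h1 : ∀ π : G ≃g G, fixP G L π = Fintype.card (MulAction.fixedBy (LCol G L) π) := by
    intro π
    rw [← Nat.card_eq_fintype_card]
    refine Nat.card_congr (Equiv.subtypeEquivRight fun f => ?_)
    rw [MulAction.mem_fixedBy, Subtype.ext_iff, funext_iff]
    simp only [hsmul]
    constructor
    · intro h v
      have := h (π.symm v)
      rw [RelIso.apply_symm_apply] at this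
      exact this.symm
    · intro h v
      have := h (π v)
      rw [RelIso.symm_apply_apply] at this
      exact this.symm
  have h2 : uell G L = Fintype.card (Quotient (MulAction.orbitRel (G ≃g G) (LCol G L))) := by
    rw [← Nat.card_eq_fintype_card]
    refine Nat.card_congr (Quot.congrRight fun f g => ?_)
    change _ ↔ f ∈ MulAction.orbit (G ≃g G) g
    rw [MulAction.mem_orbit_iff]
    refine exists_congr fun π => ?_
    rw [Subtype.ext_iff, funext_iff]
    simp only [hsmul]
    constructor
    · intro h v
      have := h (π.symm v)
      rw [RelIso.apply_symm_apply] at this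
      exact this.symm
    · intro h v
      have := h (π v)
      rw [RelIso.symm_apply_apply] at this
      exact this.symm
  rw [h2, ← hb]
  exact Finset.sum_congr rfl fun π _ => h1 π

/-- For large `k` and lists invariant under `π`, the constant lists minimize the number of colorings
fixed by `π`. These colorings are the proper list colorings of the quotient of `G` by `π`, unless
some edge has both ends in one orbit of `π`, in which case there are none. -/
theorem fixP_const_le {V : Type*} [Finite V] (G : SimpleGraph V) (π : G ≃g G) :
    ∃ N : ℕ, ∀ k : ℕ, N ≤ k → ∀ L : V → Finset ℕ, (∀ v, (L v).card = k) →
      (∀ v, L (π v) = L v) → fixP G (fun _ => Finset.range k) π ≤ fixP G L π := by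
  let q : V → Quot (fun a b : V => a = π b) := Quot.mk _
  let Q : SimpleGraph (Quot (fun a b : V => a = π b)) :=
    SimpleGraph.fromRel fun x y => ∃ a b, q a = x ∧ q b = y ∧ G.Adj a b
  obtain ⟨N, hN⟩ := listP_const_le Q
  refine ⟨N, fun k hk L hL hinv => ?_⟩
  by_cases hloop : ∃ a b, G.Adj a b ∧ q a = q b
  · obtain ⟨a, b, hab, hq⟩ := hloop
    have : IsEmpty {f : LCol G (fun _ => Finset.range k) // ∀ v, f.1 (π v) = f.1 v} := by
      refine ⟨fun f => f.1.2.1 hab ?_⟩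
      exact congrArg (Quot.lift f.1.1 fun x y hxy => by rw [hxy]; exact f.2 y) hq
    rw [fixP, Nat.card_of_isEmpty]
    exact Nat.zero_le _
  · push Not at hloop
    have key : ∀ M : Quot (fun a b : V => a = π b) → Finset ℕ,
        fixP G (fun v => M (q v)) π = listP Q M := by
      intro M
      refine Nat.card_congr
        { toFun := fun f => ⟨Quot.lift f.1.1 fun x y hxy => by rw [hxy]; exact f.2 y, ?_, ?_⟩
          invFun := fun g => ⟨⟨fun v => g.1 (q v), ?_, fun v => g.2.2 _⟩, fun v => ?_⟩
          left_inv := fun f => rfl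
          right_inv := fun g => ?_ }
      · intro x y hxy
        rw [SimpleGraph.fromRel_adj] at hxy
        rcases hxy.2 with ⟨a, b, rfl, rfl, hab⟩ | ⟨a, b, rfl, rfl, hab⟩
        · exact f.1.2.1 hab
        · exact (f.1.2.1 hab).symm
      · rintro ⟨v⟩
        exact f.1.2.2 v
      · intro a b hab
        refine g.2.1 ((SimpleGraph.fromRel_adj _ _ _).2 ⟨hloop a b hab, Or.inl ⟨a, b, rfl, rfl, hab⟩⟩)
      · exact congrArg g.1 (Quot.sound rfl)
      · refine Subtype.ext (funext ?_)
        rintro ⟨v⟩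
        rfl
    have h1 := key (fun _ => Finset.range k)
    have h2 := key (Quot.lift L fun x y hxy => by rw [hxy]; exact hinv y)
    have h3 : (fun v => (Quot.lift L fun x y hxy => by rw [hxy]; exact hinv y :
        Quot (fun a b : V => a = π b) → Finset ℕ) (q v)) = L := rfl
    rw [h3] at h2
    rw [h1, h2]
    refine hN k hk _ ?_
    rintro ⟨v⟩
    exact hL v

/-! ### Lists that are not invariant under automorphisms -/

open Finset in
/-- A set of list functions whose values at `x` and `y` are determined by the other values has at
most `k ^ (n - 2)` elements. -/
theorem card_le_of_det {V : Type*} [Fintype V] [DecidableEq V] {k : ℕ} (L : V → Finset ℕ)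
    (hL : ∀ v, #(L v) ≤ k) (S : Finset (V → ℕ)) (hS : ∀ f ∈ S, ∀ v, f v ∈ L v) {x y : V}
    (hxy : x ≠ y)
    (det : ∀ f ∈ S, ∀ g ∈ S, (∀ v, v ≠ x → v ≠ y → f v = g v) → f x = g x ∧ f y = g y) :
    #S * k ^ 2 ≤ k ^ Fintype.card V := by
  set T : Finset V := (univ.erase x).erase y with hT
  have hmem : ∀ v, v ∈ T ↔ v ≠ y ∧ v ≠ x := fun v => by simp [hT]
  have h1 : #S ≤ #(T.pi L) := by
    refine Finset.card_le_card_of_injOn (fun f v _ => f v) ?_ ?_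
    · intro f hf
      exact Finset.mem_coe.2 (Finset.mem_pi.2 fun v _ => hS f hf v)
    · intro f hf g hg h
      have hv : ∀ v, v ≠ x → v ≠ y → f v = g v := fun v h1 h2 =>
        congrFun (congrFun h v) ((hmem v).2 ⟨h2, h1⟩)
      have := det f hf g hg hv
      funext v
      by_cases h1 : v = x
      · rw [h1]; exact this.1
      · by_cases h2 : v = y
        · rw [h2]; exact this.2
        · exact hv v h1 h2
  have h2 : #(T.pi L) ≤ k ^ #T := by
    rw [Finset.card_pi]
    exact Finset.prod_le_pow_card _ _ _ fun v _ => hL v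
  have h3 : #T + 2 = Fintype.card V := by
    have e1 := Finset.card_erase_add_one (Finset.mem_univ x)
    have e2 := Finset.card_erase_add_one (s := univ.erase x) (a := y) (by simp [hxy.symm])
    rw [Finset.card_univ] at e1
    rw [← hT] at e2
    omega
  rw [← h3, pow_add]
  exact Nat.mul_le_mul_right _ (h1.trans h2)

open Finset in
/-- A nontrivial automorphism of a point-determining graph fixes at most `k ^ (n - 2)` proper
`L`-colorings. -/
theorem fixP_mul_le {V : Type*} [Fintype V] (G : SimpleGraph V)
    (hpd : ∀ u v : V, G.neighborSet u = G.neighborSet v → u = v) (π : G ≃g G) (hπ : π ≠ 1)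
    {k : ℕ} (L : V → Finset ℕ) (hL : ∀ v, #(L v) = k) :
    fixP G L π * k ^ 2 ≤ k ^ Fintype.card V := by
  classical
  rcases isEmpty_or_nonempty {f : LCol G L // ∀ v, f.1 (π v) = f.1 v} with he | ⟨⟨f₀, hf₀⟩⟩
  · rw [fixP, Nat.card_of_isEmpty, zero_mul]
    exact Nat.zero_le _
  -- Two moved vertices `x`, `y` not exchanged by `π`: the values of a fixed coloring at `x` and `y`
  -- are then determined by its other values. Such vertices exist unless `π` is a transposition,
  -- whose two vertices are nonadjacent because of `f₀` and so have the same neighborhood.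
  have hmoved : ∃ x y, x ≠ y ∧ π x ≠ x ∧ π y ≠ y ∧ ¬ (π x = y ∧ π y = x) := by
    obtain ⟨x, hx⟩ : ∃ x, π x ≠ x := by
      by_contra! h
      exact hπ (RelIso.ext h)
    by_cases hy : π (π x) = x
    · by_cases hz : ∃ z, z ≠ x ∧ z ≠ π x ∧ π z ≠ z
      · obtain ⟨z, h1, h2, h3⟩ := hz
        exact ⟨x, z, h1.symm, hx, h3, fun h => h2 h.1.symm⟩
      · push Not at hz
        have hnadj : ¬ G.Adj x (π x) := fun h => f₀.2.1 h (hf₀ x).symm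
        refine absurd (hpd x (π x) (Set.ext fun w => ?_)) (fun h => hx h.symm)
        rw [SimpleGraph.mem_neighborSet, SimpleGraph.mem_neighborSet]
        by_cases h1 : w = x
        · subst h1
          exact ⟨fun h => absurd h (G.loopless.irrefl _), fun h => absurd h.symm hnadj⟩
        · by_cases h2 : w = π x
          · rw [h2]
            exact ⟨fun h => absurd h hnadj, fun h => absurd h (G.loopless.irrefl _)⟩
          · have hw := hz w h1 h2
            have := π.map_rel_iff (a := x) (b := w)
            rw [hw] at this
            exact this.symm
    · exact ⟨x, π x, hx.symm, hx, fun h => hx (π.injective h), fun h => hy h.2⟩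
  obtain ⟨x, y, hxy, hx, hy, hsw⟩ := hmoved
  have hcard : fixP G L π = #{f ∈ Fintype.piFinset L | IsProper G f ∧ ∀ v, f (π v) = f v} := by
    rw [fixP, ← Nat.subtype_card _ (fun f => Iff.rfl)]
    refine Nat.card_congr ((Equiv.subtypeSubtypeEquivSubtypeInter
      (fun f : V → ℕ => IsProper G f ∧ ∀ v, f v ∈ L v) (fun f => ∀ v, f (π v) = f v)).trans
      (Equiv.subtypeEquivRight fun f => ?_))
    simp only [Finset.mem_filter, Fintype.mem_piFinset]
    tauto
  rw [hcard]
  refine card_le_of_det L (fun v => (hL v).le) _ (fun f hf => ?_) hxy fun f hf g hg h => ?_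
  · exact Fintype.mem_piFinset.1 (Finset.mem_filter.1 hf).1
  · have hf' := (Finset.mem_filter.1 hf).2.2
    have hg' := (Finset.mem_filter.1 hg).2.2
    have f1 := hf' x
    have f2 := hf' y
    have g1 := hg' x
    have g2 := hg' y
    have h1 := h (π x)
    have h2 := h (π y)
    clear hf hg hf' hg' h hcard hf₀ hpd hL
    by_cases e1 : π x = y
    · have e2 : π y ≠ x := fun h => hsw ⟨e1, h⟩
      have := h2 e2 hy
      rw [e1] at f1 g1
      constructor <;> omega
    · have h1' := h1 hx e1
      by_cases e2 : π y = x
      · rw [e2] at f2 g2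
        constructor <;> omega
      · have := h2 e2 hy
        constructor <;> omega

open Finset in
/-- There are at least `k ^ (n - 1) - n ^ 2 * k ^ (n - 2)` proper `L`-colorings with a prescribed
color `c ∈ L u` at `u`. -/
theorem special_lower {V : Type*} [Fintype V] (G : SimpleGraph V) {k : ℕ} (L : V → Finset ℕ)
    (hL : ∀ v, #(L v) = k) (u : V) (c : ℕ) (hc : c ∈ L u) :
    k * k ^ Fintype.card V ≤ Nat.card {f : LCol G L // f.1 u = c} * k ^ 2 +
      Fintype.card V ^ 2 * k ^ Fintype.card V := by
  classical
  set L' := Function.update L u {c} with hL'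
  have hL'u : L' u = {c} := Function.update_self ..
  have hL'v : ∀ v, v ≠ u → L' v = L v := fun v hv => Function.update_of_ne hv _ _
  set Y := Fintype.piFinset L' with hY
  have hYu : ∀ f ∈ Y, f u = c := fun f hf => by
    have := Fintype.mem_piFinset.1 hf u
    rwa [hL'u, Finset.mem_singleton] at this
  have hYL : ∀ f ∈ Y, ∀ v, f v ∈ L v := fun f hf v => by
    by_cases h : v = u
    · rw [h, hYu f hf]; exact hc
    · rw [← hL'v v h]; exact Fintype.mem_piFinset.1 hf v
  have hYcard : k * #Y = k ^ Fintype.card V := by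
    rw [hY, Fintype.card_piFinset, ← Finset.mul_prod_erase _ _ (Finset.mem_univ u), hL'u,
      Finset.prod_congr rfl (g := fun _ => k), Finset.card_singleton, one_mul,
      Finset.mul_prod_erase _ (fun _ => k) (Finset.mem_univ u), Finset.prod_const, Finset.card_univ]
    intro v hv
    rw [hL'v v (Finset.ne_of_mem_erase hv), hL]
  have hcard : Nat.card {f : LCol G L // f.1 u = c} = #{f ∈ Y | IsProper G f} := by
    rw [← Nat.subtype_card _ (fun f => Iff.rfl)]
    refine Nat.card_congr ((Equiv.subtypeSubtypeEquivSubtypeInter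
      (fun f : V → ℕ => IsProper G f ∧ ∀ v, f v ∈ L v) (fun f => f u = c)).trans
      (Equiv.subtypeEquivRight fun f => ?_))
    rw [Finset.mem_filter]
    constructor
    · rintro ⟨⟨h1, h2⟩, h3⟩
      refine ⟨Fintype.mem_piFinset.2 fun v => ?_, h1⟩
      by_cases h : v = u
      · rw [h, hL'u, h3]; exact Finset.mem_singleton_self _
      · rw [hL'v v h]; exact h2 v
    · rintro ⟨h1, h2⟩
      exact ⟨⟨h2, hYL f h1⟩, hYu f h1⟩
  -- Of the two orientations of a monochromatic edge, one starts at a vertex other than `u`.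
  set B : V × V → Finset (V → ℕ) := fun p => {f ∈ Y | p.1 ≠ u ∧ p.1 ≠ p.2 ∧ f p.1 = f p.2} with hB
  have hcover : Y ⊆ ({f ∈ Y | IsProper G f} : Finset (V → ℕ)) ∪ univ.biUnion B := by
    intro f hf
    simp only [Finset.mem_union, Finset.mem_biUnion, Finset.mem_univ, true_and, hB,
      Finset.mem_filter, hf]
    by_cases h : IsProper G f
    · exact Or.inl h
    · right
      unfold IsProper at h
      push Not at h
      obtain ⟨a, b, hab, he⟩ := h
      by_cases ha : a = u
      · exact ⟨(b, a), fun hb => hab.ne (ha.trans hb.symm), hab.ne', he.symm⟩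
      · exact ⟨(a, b), ha, hab.ne, he⟩
  have hBc : ∀ p, #(B p) * k ^ 2 ≤ k ^ Fintype.card V := by
    rintro ⟨a, b⟩
    by_cases h : a ≠ u ∧ a ≠ b
    · refine card_le_of_det L (fun v => (hL v).le) _ (fun f hf => ?_) h.1 fun f hf g hg h' => ?_
      · exact hYL f (Finset.mem_filter.1 hf).1
      · have f1 := hYu f (Finset.mem_filter.1 hf).1
        have g1 := hYu g (Finset.mem_filter.1 hg).1
        refine ⟨?_, f1.trans g1.symm⟩
        have f2 : f a = f b := (Finset.mem_filter.1 hf).2.2.2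
        have g2 : g a = g b := (Finset.mem_filter.1 hg).2.2.2
        rw [f2, g2]
        by_cases hb : b = u
        · rw [hb, f1, g1]
        · exact h' b h.2.symm hb
    · have : B (a, b) = ∅ := Finset.filter_false_of_mem fun f _ hf => h ⟨hf.1, hf.2.1⟩
      rw [this]
      simp
  have h1 : #Y ≤ _ := (Finset.card_le_card hcover).trans (Finset.card_union_le _ _)
  have h2 : #(univ.biUnion B) ≤ ∑ p, #(B p) := Finset.card_biUnion_le
  have h3 : (∑ p, #(B p)) * k ^ 2 ≤ Fintype.card V ^ 2 * k ^ Fintype.card V := by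
    rw [Finset.sum_mul]
    refine (Finset.sum_le_card_nsmul univ _ _ fun p _ => hBc p).trans ?_
    rw [Finset.card_univ, Fintype.card_prod, smul_eq_mul, sq (Fintype.card V)]
  rw [hcard]
  calc k * k ^ Fintype.card V = #Y * k ^ 2 := by rw [← hYcard]; ring
    _ ≤ (_ + ∑ p, #(B p)) * k ^ 2 := Nat.mul_le_mul_right _ (h1.trans (Nat.add_le_add_left h2 _))
    _ ≤ _ := by rw [add_mul]; exact Nat.add_le_add_left h3 _

open Finset in
/-- Classes have at most `|Aut G|` elements, and at most `|Aut G| - 1` if they contain an `f` with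
`f (π v) = c`, since `f ∘ π` is then not an `L`-coloring. Hence giving weight `|Aut G| + 1` to these
`f` and weight `|Aut G|` to the other colorings, every class has weight at most `|Aut G| ^ 2`. -/
theorem class_bound {V : Type*} [Finite V] (G : SimpleGraph V) [Fintype (G ≃g G)]
    (L : V → Finset ℕ) (π : G ≃g G) (v : V) (c : ℕ) (hc : c ∉ L v) :
    Fintype.card (G ≃g G) * listP G L + Nat.card {f : LCol G L // f.1 (π v) = c} ≤
      Fintype.card (G ≃g G) ^ 2 * uell G L := by
  classical
  have := finite_lCol G L
  let _ := Fintype.ofFinite (LCol G L)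
  let R : LCol G L → LCol G L → Prop := fun f g => ∃ π : G ≃g G, ∀ v, f.1 (π v) = g.1 v
  have hR : Equivalence R :=
    { refl := fun f => ⟨1, fun v => rfl⟩
      symm := fun {f g} ⟨σ, h⟩ => ⟨σ.symm, fun v => by
        rw [← h, RelIso.apply_symm_apply]⟩
      trans := fun {f g h} ⟨σ, h1⟩ ⟨τ, h2⟩ => ⟨σ * τ, fun v => by
        rw [RelIso.mul_apply, h1, h2]⟩ }
  let _ : Fintype (Quot R) := Fintype.ofFinite _
  have hu : uell G L = Fintype.card (Quot R) := Nat.card_eq_fintype_card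
  have hl : listP G L = #(univ : Finset (LCol G L)) := by
    rw [Finset.card_univ]; exact Nat.card_eq_fintype_card
  have hs : Nat.card {f : LCol G L // f.1 (π v) = c} = #{f : LCol G L | f.1 (π v) = c} :=
    Nat.subtype_card _ fun f => by simp
  set a := Fintype.card (G ≃g G) with ha
  have hfib : ∀ q : Quot R, (∑ f with Quot.mk R f = q, (a + if f.1 (π v) = c then 1 else 0)) ≤
      a ^ 2 := by
    intro q
    set F : Finset (LCol G L) := {f | Quot.mk R f = q} with hF
    have hrel : ∀ f ∈ F, ∀ g ∈ F, R f g := fun f hf g hg => by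
      simp only [hF, Finset.mem_filter, Finset.mem_univ, true_and] at hf hg
      exact hR.eqvGen_iff.1 (Quot.eqvGen_exact (hf.trans hg.symm))
    have himg : #(F.image Subtype.val) = #F := Finset.card_image_of_injective _ Subtype.val_injective
    by_cases hsp : ∃ f ∈ F, f.1 (π v) = c
    · obtain ⟨f, hf, hfc⟩ := hsp
      have h1 : F.image Subtype.val ⊆
          (univ.erase π).image fun (σ : G ≃g G) (w : V) => f.1 (σ w) := by
        intro g' hg'
        obtain ⟨g, hg, rfl⟩ := Finset.mem_image.1 hg'
        obtain ⟨σ, hσ⟩ := hrel f hf g hg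
        refine Finset.mem_image.2 ⟨σ, Finset.mem_erase.2 ⟨?_, Finset.mem_univ _⟩, funext hσ⟩
        rintro rfl
        apply hc
        rw [← hfc, hσ]
        exact g.2.2 v
      have h2 : #F + 1 ≤ a := by
        rw [← himg, ha, ← Finset.card_univ, ← Finset.card_erase_add_one (Finset.mem_univ π)]
        exact Nat.add_le_add_right ((Finset.card_le_card h1).trans Finset.card_image_le) 1
      refine (Finset.sum_le_card_nsmul F _ (a + 1) fun g _ => ?_).trans ?_
      · split_ifs <;> omega
      · rw [smul_eq_mul]
        clear_value a
        obtain ⟨b, rfl⟩ : ∃ b, a = b + 1 := ⟨a - 1, by omega⟩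
        nlinarith
    · push Not at hsp
      have h1 : F.Nonempty → #F ≤ a := by
        rintro ⟨f, hf⟩
        rw [← himg, ha, ← Finset.card_univ]
        refine (Finset.card_le_card (t := univ.image fun (σ : G ≃g G) (w : V) => f.1 (σ w))
          ?_).trans Finset.card_image_le
        intro g' hg'
        obtain ⟨g, hg, rfl⟩ := Finset.mem_image.1 hg'
        obtain ⟨σ, hσ⟩ := hrel f hf g hg
        exact Finset.mem_image.2 ⟨σ, Finset.mem_univ _, funext hσ⟩
      have h2 : #F ≤ a := by
        rcases F.eq_empty_or_nonempty with h | h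
        · rw [h]; simp
        · exact h1 h
      rw [Finset.sum_congr rfl (g := fun _ => a) fun g hg => by rw [if_neg (hsp g hg), add_zero],
        Finset.sum_const, smul_eq_mul, sq]
      exact Nat.mul_le_mul_right _ h2
  have htot := Finset.sum_le_sum fun (q : Quot R) (_ : q ∈ univ) => hfib q
  rw [Finset.sum_fiberwise univ (fun f => Quot.mk R f), Finset.sum_add_distrib, Finset.sum_const, Finset.sum_const,
    ← Finset.card_filter, smul_eq_mul, smul_eq_mul, Finset.card_univ (α := Quot R), ← hl, ← hs,
    ← hu] at htot
  linarith

/-- For all large `k`, constant lists minimize the number of equivalence classes of colorings. -/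
theorem uell_const_le {V : Type*} [Fintype V] (G : SimpleGraph V)
    (hpd : ∀ u v : V, G.neighborSet u = G.neighborSet v → u = v) :
    ∃ N : ℕ, ∀ k : ℕ, N ≤ k → ∀ L : V → Finset ℕ, (∀ v, (L v).card = k) →
      uell G (fun _ => Finset.range k) ≤ uell G L := by
  classical
  have := finite_aut G
  have := Fintype.ofFinite (G ≃g G)
  choose N hN using fixP_const_le G
  obtain ⟨N₀, hN₀⟩ := listP_const_le G
  set a := Fintype.card (G ≃g G) with ha
  have hapos : 0 < a := Fintype.card_pos
  set n := Fintype.card V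
  -- The term `n ^ 2 + a ^ 2` serves the case of noninvariant lists, where the gain is at least
  -- `k ^ (n - 1) - n ^ 2 * k ^ (n - 2)` and the loss at most `a ^ 2 * k ^ (n - 2)`.
  refine ⟨Finset.univ.sup N + N₀ + n ^ 2 + a ^ 2, fun k hk L hL => ?_⟩
  have hK : ∀ v : V, (Finset.range k).card = k := fun _ => Finset.card_range k
  have bK := burnside G (fun _ => Finset.range k) (fun _ _ => rfl)
  by_cases hinv : ∀ (π : G ≃g G) v, L (π v) = L v
  · have bL := burnside G L hinv
    refine Nat.le_of_mul_le_mul_right ?_ hapos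
    rw [← bK, ← bL]
    refine Finset.sum_le_sum fun π _ => hN π k ?_ L hL (hinv π)
    have := Finset.le_sup (f := N) (Finset.mem_univ π)
    omega
  · push Not at hinv
    obtain ⟨π, v, hne⟩ := hinv
    obtain ⟨c, hc, hc'⟩ : ∃ c ∈ L (π v), c ∉ L v := by
      by_contra! h
      exact hne (Finset.eq_of_subset_of_card_le h (by rw [hL, hL]))
    have hk1 : 1 ≤ k := by
      have := Nat.pow_pos (n := 2) hapos
      omega
    have cb := class_bound G L π v c hc'
    have sl := special_lower G L hL (π v) c hc
    have hP := hN₀ k (by omega) L hL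
    have hfix1 : fixP G (fun _ => Finset.range k) 1 = listP G (fun _ => Finset.range k) :=
      Nat.card_congr (Equiv.subtypeUnivEquiv fun f v => rfl)
    have hrest : (∑ σ ∈ Finset.univ.erase (1 : G ≃g G), fixP G (fun _ => Finset.range k) σ) * k ^ 2
        ≤ a * k ^ n := by
      rw [Finset.sum_mul]
      refine (Finset.sum_le_card_nsmul _ _ _ fun σ hσ =>
        fixP_mul_le G hpd σ (Finset.ne_of_mem_erase hσ) _ hK).trans ?_
      rw [smul_eq_mul]
      exact Nat.mul_le_mul_right _ ((Finset.card_erase_le).trans_eq Finset.card_univ)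
    rw [← Finset.add_sum_erase _ _ (Finset.mem_univ (1 : G ≃g G)), hfix1] at bK
    have hkk : (n ^ 2 + a ^ 2) * k ^ n ≤ k * k ^ n := Nat.mul_le_mul_right _ (by omega)
    have hpos : 0 < a ^ 2 * k ^ 2 := by positivity
    refine Nat.le_of_mul_le_mul_left ?_ hpos
    generalize (∑ σ ∈ Finset.univ.erase (1 : G ≃g G), fixP G (fun _ => Finset.range k) σ) = S at *
    generalize Nat.card {f : LCol G L // f.1 (π v) = c} = sp at *
    generalize listP G (fun _ => Finset.range k) = PK at *
    generalize listP G L = PL at *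
    generalize uell G (fun _ => Finset.range k) = uK at *
    generalize uell G L = uL at *
    rw [← ha] at bK cb
    calc a ^ 2 * k ^ 2 * uK = a * k ^ 2 * (uK * a) := by ring
      _ = a * k ^ 2 * PK + a * (S * k ^ 2) := by rw [← bK]; ring
      _ ≤ a * k ^ 2 * PL + a * (a * k ^ n) := by gcongr
      _ ≤ (a * PL + sp) * k ^ 2 := by
          have : a ^ 2 * k ^ n ≤ sp * k ^ 2 := by nlinarith
          nlinarith
      _ ≤ (a ^ 2 * uL) * k ^ 2 := Nat.mul_le_mul_right _ cb
      _ = _ := by ring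

/-- Corollary: point-determining graphs.
If `G` is a connected point-determining graph (no two distinct vertices have the same
neighborhood), then there is `N` such that for all `k ≥ N`, `P_ℓ(𝒢,k) = P(𝒢,k)`. -/
theorem statement_6 {V : Type*} [Fintype V] (G : SimpleGraph V)
    (hconn : G.Connected)
    (hpd : ∀ u v : V, G.neighborSet u = G.neighborSet v → u = v) :
    ∃ N : ℕ, ∀ k : ℕ, N ≤ k → Pell G k = unlabeledP G k := by
  obtain ⟨N, hN⟩ := uell_const_le G hpd
  refine ⟨N, fun k hk => ?_⟩
  rw [unlabeledP_eq]
  refine le_antisymm (Nat.sInf_le ⟨_, fun _ => Finset.card_range k, rfl⟩) ?_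
  refine le_csInf ⟨_, _, fun _ => Finset.card_range k, rfl⟩ ?_
  rintro n ⟨L, hL, rfl⟩
  exact hN k hk L hL
end

section
/- Let G be a finite simple graph such that every non-identity automorphism π of G has some cycle containing two vertices that are adjacent in G. Let k ∈ ℕ and suppose that every k-assignment L for G satisfies P(G,L) ≥ P(G,k) (i.e., the list color function satisfies P_ℓ(G,k) = P(G,k)). Then the minimum of u_ℓ(G,L) over all k-assignments L for G equals the number of orbits of the action of Aut(G) on proper colorings f : V(G) → {1,…,k} (where π sends f to f∘π⁻¹). -/
/-- `Aut(G)` acts freely on proper colorings. -/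
lemma eq_of_isProper_of_comp_eq {V α : Type*} {G : SimpleGraph V}
    (haut : ∀ π : G ≃g G, π.toEquiv ≠ Equiv.refl V →
      ∃ u v : V, G.Adj u v ∧ Equiv.Perm.SameCycle π.toEquiv u v)
    {f : V → α} (hf : IsProper G f) {π σ : G ≃g G} (h : ∀ v, f (π v) = f (σ v)) : π = σ := by
  have hinv : ∀ v, f (((σ.symm.trans π).toEquiv : Equiv.Perm V) v) = f v := fun v => by
    simpa using h (σ.symm v)
  have hid : (σ.symm.trans π).toEquiv = Equiv.refl V := by
    by_contra hne
    obtain ⟨u, v, huv, n, hn⟩ := haut _ hne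
    have hz : ∀ (m : ℤ) (w : V), f ((((σ.symm.trans π).toEquiv : Equiv.Perm V) ^ m) w) = f w := by
      intro m
      induction m with
      | zero => simp
      | succ m ih => intro w; rw [zpow_add_one, Equiv.Perm.mul_apply, ih, hinv]
      | pred m ih =>
        intro w
        rw [zpow_sub_one, Equiv.Perm.mul_apply, ih]
        simpa using (hinv ((((σ.symm.trans π).toEquiv : Equiv.Perm V)⁻¹) w)).symm
    exact hf huv (by rw [← hn, hz])
  ext v
  simpa using DFunLike.congr_fun hid (σ v)

lemma finite_listColoring {V : Type*} [Finite V] (G : SimpleGraph V) (L : V → Finset ℕ) :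
    Finite {f : V → ℕ // IsProper G f ∧ ∀ v, f v ∈ L v} :=
  Finite.of_injective (fun f v => (⟨f.1 v, f.2.2 v⟩ : L v)) fun f g h => by
    ext v
    simpa using congrFun h v

lemma unlabeledP_mul_card_le {V : Type*} [Finite V] (G : SimpleGraph V) (k : ℕ)
    (haut : ∀ π : G ≃g G, π.toEquiv ≠ Equiv.refl V →
      ∃ u v : V, G.Adj u v ∧ Equiv.Perm.SameCycle π.toEquiv u v) :
    unlabeledP G k * Nat.card (G ≃g G) ≤ chromP G k := by
  rw [unlabeledP, chromP, ← Nat.card_prod]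
  refine Nat.card_le_card_of_injective
    (fun p => ⟨fun v => p.1.out.1 (p.2 v), fun _ _ huv => p.1.out.2 (p.2.map_adj_iff.2 huv)⟩) ?_
  rintro ⟨p, π⟩ ⟨q, σ⟩ h
  have h' : ∀ v, p.out.1 (π v) = q.out.1 (σ v) := fun v => congrFun (Subtype.ext_iff.1 h) v
  obtain rfl : p = q := by
    rw [← Quot.out_eq p, ← Quot.out_eq q]
    exact Quot.sound ⟨σ.symm.trans π, fun v => by simpa using h' (σ.symm v)⟩
  rw [eq_of_isProper_of_comp_eq haut p.out.2 h']

lemma listP_le_uell_mul_card {V : Type*} [Finite V] (G : SimpleGraph V) (L : V → Finset ℕ) :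
    listP G L ≤ uell G L * Nat.card (G ≃g G) := by
  have := finite_listColoring G L
  have : Finite (G ≃g G) := DFunLike.finite _
  rw [uell, listP, ← Nat.card_prod]
  set r := fun f g : {f : V → ℕ // IsProper G f ∧ ∀ v, f v ∈ L v} =>
    ∃ π : G ≃g G, ∀ v, f.1 (π v) = g.1 v
  have hr : Equivalence r :=
    ⟨fun f => ⟨RelIso.refl _, fun v => rfl⟩,
      fun ⟨π, h⟩ => ⟨π.symm, fun v => by simpa using (h (π.symm v)).symm⟩,
      fun ⟨π, h⟩ ⟨σ, h'⟩ => ⟨σ.trans π, fun v => (h (σ v)).trans (h' v)⟩⟩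
  have hout : ∀ f, r (Quot.mk r f).out f := fun f =>
    hr.eqvGen_iff.1 (Quot.eqvGen_exact (Quot.out_eq (Quot.mk r f)))
  choose π hπ using hout
  -- `f` is recovered from its class and the automorphism carrying the representative to `f`.
  refine Nat.card_le_card_of_injective (fun f => (Quot.mk r f, π f)) fun f g h => ?_
  obtain ⟨h₁, h₂⟩ := Prod.mk.inj h
  ext v
  rw [← hπ f v, ← hπ g v, h₁, h₂]

lemma uell_range {V : Type*} (G : SimpleGraph V) (k : ℕ) :
    uell G (fun _ => Finset.range k) = unlabeledP G k := by
  refine Nat.card_congr (Quot.congr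
    { toFun := fun f => ⟨fun v => ⟨f.1 v, Finset.mem_range.1 (f.2.2 v)⟩,
        fun u v huv h => f.2.1 huv (Fin.mk.inj h)⟩
      invFun := fun f => ⟨fun v => (f.1 v : ℕ),
        fun u v huv h => f.2 huv (Fin.ext h), fun v => Finset.mem_range.2 (f.1 v).2⟩
      left_inv := fun f => rfl
      right_inv := fun f => rfl } fun f g => ?_)
  simp [Fin.ext_iff]

/-- Proposition: graphs with only "rigid" automorphisms.
Suppose every non-identity automorphism of `G` has some cycle containing two adjacent
vertices, and suppose every `k`-assignment `L` satisfies `P(G,L) ≥ P(G,k)` (i.e.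
`P_ℓ(G,k) = P(G,k)`). Then `P_ℓ(𝒢,k) = P(𝒢,k)`. -/
theorem statement_11 {V : Type*} [Fintype V] (G : SimpleGraph V) (k : ℕ)
    (haut : ∀ π : G ≃g G, π.toEquiv ≠ Equiv.refl V →
      ∃ u v : V, G.Adj u v ∧ Equiv.Perm.SameCycle π.toEquiv u v)
    (hlist : ∀ L : V → Finset ℕ, (∀ v, (L v).card = k) → chromP G k ≤ listP G L) :
    Pell G k = unlabeledP G k := by
  have : Finite (G ≃g G) := DFunLike.finite _
  have : Nonempty (G ≃g G) := ⟨RelIso.refl _⟩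
  have hmem : unlabeledP G k ∈
      {n | ∃ L : V → Finset ℕ, (∀ v, (L v).card = k) ∧ n = uell G L} :=
    ⟨fun _ => Finset.range k, fun _ => Finset.card_range k, (uell_range G k).symm⟩
  refine le_antisymm (Nat.sInf_le hmem) (le_csInf ⟨_, hmem⟩ ?_)
  rintro _ ⟨L, hL, rfl⟩
  exact Nat.le_of_mul_le_mul_right
    ((unlabeledP_mul_card_le G k haut).trans ((hlist L hL).trans (listP_le_uell_mul_card G L)))
    Nat.card_pos
end
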